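/- Two non-real coquaternions p, q ∈ 𝕊 are similar (there exists an invertible h ∈ 𝕊 with q = h⁻¹ p h) if and only if re(p) = re(q) and dv(p) = dv(q). -/

import Mathlib

open Quaternion Polynomial

noncomputable section

/-- The real algebra of coquaternions (split quaternions):
basis `1, i, j, k` with `i² = -1`, `j² = k² = 1`, `ij = -ji = k`. -/
abbrev CoQ : Type := ℍ[ℝ, -1, 1]

/-- The determinant of a coquaternion: `det q = q₀² + q₁² - q₂² - q₃²` (equals `q * star q`). -/
def coDet (q : CoQ) : ℝ := q.re ^ 2 + q.imI ^ 2 - q.imJ ^ 2 - q.imK ^ 2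

/-- The determinant of the vector part of a coquaternion: `dv q = q₁² - q₂² - q₃²`. -/
def coDv (q : CoQ) : ℝ := q.imI ^ 2 - q.imJ ^ 2 - q.imK ^ 2

/-!
In a quaternion algebra with `i² = a`, `j² = b`, a vector `x` satisfies `x² = -N(x)`. Hence, if `x`
and `y` are vectors of equal norm, every `h = x c + c y` satisfies `x h = h y`, and it remains to
choose `c` with `N(h) ≠ 0`, so that `h` is invertible. If `N(h)` vanished for `c = 1, i, j, k`,
then, as `N(h) = N(c) N(x + c y c⁻¹)` and conjugation by `i`, `j`, `k` changes the signs of two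
coordinates of `y`, both `N(x)` and all the products `xᵢ yᵢ` would vanish (when `a, b, 2 ≠ 0`). One
of `x`, `y` then has at most one nonzero coordinate and, having norm zero, is zero.
-/

theorem isConj_iff_exists_eq_inv_mul_mul {M : Type*} [Monoid M] {p q : M} :
    IsConj p q ↔ ∃ u : Mˣ, q = ↑u⁻¹ * p * ↑u := by
  rw [isConj_comm]
  simp only [IsConj, SemiconjBy, mul_assoc, Units.eq_inv_mul_iff_mul_eq]

theorem semiconjBy_mul_add_mul {R : Type*} [NonUnitalSemiring R] {x y c : R}
    (h : x * x * c = c * (y * y)) : SemiconjBy (x * c + c * y) y x := by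
  rw [SemiconjBy, add_mul, mul_add, mul_assoc c, ← h, mul_assoc, mul_assoc, add_comm]

theorem im_eq_zero_iff {R : Type*} [Zero R] {a b c : R} {q : ℍ[R,a,b,c]} :
    q.im = 0 ↔ q.imI = 0 ∧ q.imJ = 0 ∧ q.imK = 0 := by
  simp [QuaternionAlgebra.ext_iff]

section CommRing

variable {R : Type*} [CommRing R]

/-- The reduced norm `q ↦ q * star q` of a quaternion algebra, as a multiplicative map to the base
ring. The real part serves to read off the scalar `q * star q`. -/
def reducedNorm {a b c : R} : ℍ[R,a,b,c] →* R where
  toFun q := (q * star q).re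
  map_one' := by simp
  map_mul' p q := by
    apply QuaternionAlgebra.coe_injective (c₁ := a) (c₂ := b) (c₃ := c)
    calc ((p * q * star (p * q)).re : ℍ[R,a,b,c])
      _ = p * (q * star q) * star p := by
        rw [← QuaternionAlgebra.mul_star_eq_coe, star_mul]
        simp only [mul_assoc]
      _ = p * star p * (q * star q) := by
        rw [q.mul_star_eq_coe, mul_assoc, QuaternionAlgebra.coe_commutes, mul_assoc]
      _ = ((p * star p).re * (q * star q).re : R) := by
        rw [QuaternionAlgebra.coe_mul, ← p.mul_star_eq_coe, ← q.mul_star_eq_coe]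

theorem coe_reducedNorm {a b c : R} (q : ℍ[R,a,b,c]) :
    ((reducedNorm q : R) : ℍ[R,a,b,c]) = q * star q :=
  q.mul_star_eq_coe.symm

theorem isUnit_reducedNorm_iff {a b c : R} {q : ℍ[R,a,b,c]} :
    IsUnit (reducedNorm q) ↔ IsUnit q := by
  refine ⟨fun h => ?_, fun h => h.map reducedNorm⟩
  have hunit : IsUnit (q * star q) := by
    rw [← coe_reducedNorm]
    exact h.map (algebraMap R ℍ[R,a,b,c])
  exact ((star_comm_self (x := q)).symm.isUnit_mul_iff.mp hunit).1

variable {a b : R} {p q : ℍ[R,a,b]}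

theorem reducedNorm_eq (q : ℍ[R,a,b]) :
    reducedNorm q = q.re ^ 2 - a * q.imI ^ 2 - b * q.imJ ^ 2 + a * b * q.imK ^ 2 := by
  simp only [reducedNorm, MonoidHom.coe_mk, OneHom.coe_mk, QuaternionAlgebra.re_mul,
    QuaternionAlgebra.re_star, QuaternionAlgebra.imI_star, QuaternionAlgebra.imJ_star,
    QuaternionAlgebra.imK_star]
  ring

theorem reducedNorm_add (p q : ℍ[R,a,b]) :
    reducedNorm (p + q) = reducedNorm p + reducedNorm q + 2 * (p * star q).re := by
  simp only [reducedNorm_eq, QuaternionAlgebra.re_add, QuaternionAlgebra.imI_add,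
    QuaternionAlgebra.imJ_add, QuaternionAlgebra.imK_add, QuaternionAlgebra.re_mul,
    QuaternionAlgebra.re_star, QuaternionAlgebra.imI_star, QuaternionAlgebra.imJ_star,
    QuaternionAlgebra.imK_star]
  ring

theorem im_mul_im (q : ℍ[R,a,b]) : q.im * q.im = -((reducedNorm q.im : R) : ℍ[R,a,b]) := by
  simp [coe_reducedNorm]

theorem re_mul_comm (p q : ℍ[R,a,b]) : (p * q).re = (q * p).re := by
  simp only [QuaternionAlgebra.re_mul]
  ring

theorem re_eq_of_isConj (h : IsConj p q) : p.re = q.re := by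
  obtain ⟨u, rfl⟩ := isConj_iff_exists_eq_inv_mul_mul.mp h
  rw [re_mul_comm, ← mul_assoc, Units.mul_inv, one_mul]

theorem isConj_iff_re_eq_and_isConj_im : IsConj p q ↔ p.re = q.re ∧ IsConj p.im q.im := by
  constructor
  · intro h
    have hre := re_eq_of_isConj h
    obtain ⟨u, hu⟩ := h
    refine ⟨hre, u, ?_⟩
    rw [← p.sub_re_self, ← q.sub_re_self, hre]
    exact hu.sub_right (QuaternionAlgebra.coe_commute _ _).symm
  · rintro ⟨hre, u, hu⟩
    refine ⟨u, ?_⟩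
    rw [← p.re_add_im, ← q.re_add_im, hre]
    exact SemiconjBy.add_right (QuaternionAlgebra.coe_commute _ _).symm hu

theorem semiconjBy_im_mul_add_mul_im (h : reducedNorm p.im = reducedNorm q.im) (c : ℍ[R,a,b]) :
    SemiconjBy (p.im * c + c * q.im) q.im p.im := by
  apply semiconjBy_mul_add_mul
  rw [im_mul_im, im_mul_im, h, neg_mul, mul_neg, QuaternionAlgebra.coe_commutes]

theorem reducedNorm_im_mul_add_mul_im (h : reducedNorm p.im = reducedNorm q.im) (c : ℍ[R,a,b]) :
    reducedNorm (p.im * c + c * q.im) =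
      2 * (reducedNorm p.im * reducedNorm c - (p.im * c * (q.im * star c)).re) := by
  have hstar : star (c * q.im) = -(q.im * star c) := by simp [star_mul]
  rw [reducedNorm_add, hstar, map_mul, map_mul, ← h, mul_neg, QuaternionAlgebra.re_neg]
  ring

end CommRing

section Field

variable {F : Type*} [Field F] {a b : F} {p q : ℍ[F,a,b]}

theorem im_eq_zero_or_im_eq_zero_of_isotropic (ha : a ≠ 0) (hb : b ≠ 0)
    (hp : reducedNorm p.im = 0) (hq : reducedNorm q.im = 0)
    (hI : p.imI * q.imI = 0) (hJ : p.imJ * q.imJ = 0) (hK : p.imK * q.imK = 0) :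
    p.im = 0 ∨ q.im = 0 := by
  rw [reducedNorm_eq] at hp hq
  rcases mul_eq_zero.mp hI with hI | hI <;> rcases mul_eq_zero.mp hJ with hJ | hJ <;>
    rcases mul_eq_zero.mp hK with hK | hK <;> simp_all [im_eq_zero_iff]

variable [NeZero (2 : F)]

theorem eq_zero_and_coords_mul_eq_zero_of_forall {n : F} (ha : a ≠ 0) (hb : b ≠ 0)
    (h : ∀ c : ℍ[F,a,b], n * reducedNorm c = (p.im * c * (q.im * star c)).re) :
    n = 0 ∧ p.imI * q.imI = 0 ∧ p.imJ * q.imJ = 0 ∧ p.imK * q.imK = 0 := by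
  have h2 : (2 : F) ≠ 0 := two_ne_zero
  have at_one := h ⟨1, 0, 0, 0⟩
  have at_i := h ⟨0, 1, 0, 0⟩
  have at_j := h ⟨0, 0, 1, 0⟩
  have at_k := h ⟨0, 0, 0, 1⟩
  simp only [reducedNorm_eq, QuaternionAlgebra.star_mk, QuaternionAlgebra.re_mul,
    QuaternionAlgebra.imI_mul, QuaternionAlgebra.imJ_mul, QuaternionAlgebra.imK_mul,
    QuaternionAlgebra.re_im, QuaternionAlgebra.imI_im, QuaternionAlgebra.imJ_im,
    QuaternionAlgebra.imK_im] at at_one at_i at_j at_k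
  have hn : n = 0 := by
    have : 2 ^ 2 * a * b * n = 0 := by
      linear_combination a * b * at_one - b * at_i - a * at_j + at_k
    simpa [ha, hb, h2] using this
  have hI : 2 * a ^ 2 * (p.imI * q.imI) = 0 := by
    linear_combination at_i - a * at_one + 2 * a * hn
  have hJ : 2 * b ^ 2 * (p.imJ * q.imJ) = 0 := by
    linear_combination at_j - b * at_one + 2 * b * hn
  have hK : 2 * (a * b) ^ 2 * (p.imK * q.imK) = 0 := by
    linear_combination at_k + a * b * at_one - 2 * a * b * hn
  refine ⟨hn, ?_, ?_, ?_⟩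
  · simpa [ha, h2] using hI
  · simpa [hb, h2] using hJ
  · simpa [ha, hb, h2] using hK

theorem exists_reducedNorm_im_mul_add_mul_im_ne_zero (ha : a ≠ 0) (hb : b ≠ 0)
    (hp : p.im ≠ 0) (hq : q.im ≠ 0) (h : reducedNorm p.im = reducedNorm q.im) :
    ∃ c, reducedNorm (p.im * c + c * q.im) ≠ 0 := by
  by_contra! hvanish
  have hre (c : ℍ[F,a,b]) :
      reducedNorm p.im * reducedNorm c = (p.im * c * (q.im * star c)).re := by
    have hc := hvanish c
    rw [reducedNorm_im_mul_add_mul_im h] at hc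
    exact sub_eq_zero.mp ((mul_eq_zero.mp hc).resolve_left two_ne_zero)
  obtain ⟨hnorm, hI, hJ, hK⟩ := eq_zero_and_coords_mul_eq_zero_of_forall ha hb hre
  exact (im_eq_zero_or_im_eq_zero_of_isotropic ha hb hnorm (h ▸ hnorm) hI hJ hK).elim hp hq

theorem stmt_5_general (ha : a ≠ 0) (hb : b ≠ 0) (hp : p.im ≠ 0) (hq : q.im ≠ 0) :
    (∃ u : ℍ[F,a,b]ˣ, q = ↑u⁻¹ * p * ↑u) ↔
      p.re = q.re ∧ reducedNorm p.im = reducedNorm q.im := by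
  rw [← isConj_iff_exists_eq_inv_mul_mul, isConj_iff_re_eq_and_isConj_im]
  refine and_congr_right fun _ =>
    ⟨fun h => isConj_iff_eq.mp (reducedNorm.map_isConj h), fun h => ?_⟩
  obtain ⟨c, hc⟩ := exists_reducedNorm_im_mul_add_mul_im_ne_zero ha hb hp hq h
  have hunit : IsUnit (p.im * c + c * q.im) := isUnit_reducedNorm_iff.mp hc.isUnit
  exact IsConj.symm ⟨hunit.unit, semiconjBy_im_mul_add_mul_im h c⟩

end Field

theorem coDv_eq_reducedNorm_im (q : CoQ) : coDv q = reducedNorm q.im := by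
  simp only [coDv, reducedNorm_eq, QuaternionAlgebra.re_im, QuaternionAlgebra.imI_im,
    QuaternionAlgebra.imJ_im, QuaternionAlgebra.imK_im]
  ring

/-- Two non-real coquaternions are similar iff they have the same real part and the
same determinant of the vector part. -/
theorem stmt_5 (p q : CoQ)
    (hp : ¬(p.imI = 0 ∧ p.imJ = 0 ∧ p.imK = 0))
    (hq : ¬(q.imI = 0 ∧ q.imJ = 0 ∧ q.imK = 0)) :
    (∃ u : CoQˣ, q = (↑u⁻¹ : CoQ) * p * ↑u) ↔ (p.re = q.re ∧ coDv p = coDv q) := by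
  rw [← im_eq_zero_iff] at hp hq
  simpa only [coDv_eq_reducedNorm_im] using
    stmt_5_general (neg_ne_zero.mpr one_ne_zero) one_ne_zero hp hq
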